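/- arXiv:2309.12649 — 4 statements merged into one kernel-verified Lean document; each statement's English description precedes it below -/
import Mathlib

section
/- Fix an integer N ≥ 2, t ∈ [0,1], n ≥ 1 and integers a_1, …, a_n all ≥ N. Let s^t_{N,n} be the number defined recursively by s^t_{N,0} = t and s^t_{N,k} = 1 − N/(a_k + s^t_{N,k−1}) for 1 ≤ k ≤ n. Then for every x ∈ [0,1], ρ^t_N({y ∈ I(a_1,…,a_n) : R_N^n(y) < x}) = ρ^t_N(I(a_1,…,a_n)) · Nx/(N − (1−x)(1−s^t_{N,n})). (Generalized Brodén–Borel–Lévy formula.) -/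
open MeasureTheory Set Real Filter

/-- The Rényi-type continued fraction map `R_N`. -/
noncomputable def RN (N : ℕ) (x : ℝ) : ℝ :=
  if x = 1 then 0 else (N : ℝ) / (1 - x) - ⌊(N : ℝ) / (1 - x)⌋

/-- `digit N k x` is the `(k+1)`-st digit `a_{k+1}(x)`. -/
noncomputable def digit (N k : ℕ) (x : ℝ) : ℤ :=
  ⌊(N : ℝ) / (1 - (RN N)^[k] x)⌋

/-- The cylinder `I(a_1, …, a_n)`. -/
def cyl (N n : ℕ) (a : ℕ → ℤ) : Set ℝ :=
  {x | x ∈ Set.Icc (0 : ℝ) 1 ∧ Irrational x ∧ ∀ k < n, digit N k x = a k}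

/-- The conditional probability measure `ρ^t_N`, with density
`N(N-1+t)/[N-(1-x)(1-t)]²` on `[0,1]`. -/
noncomputable def rhoT (N : ℕ) (t : ℝ) : Measure ℝ :=
  (volume.restrict (Set.Icc (0 : ℝ) 1)).withDensity fun x =>
    ENNReal.ofReal ((N : ℝ) * ((N : ℝ) - 1 + t) / ((N : ℝ) - (1 - x) * (1 - t)) ^ 2)

/-- `s^t_{N,k}` built from a prescribed digit sequence `a`. -/
noncomputable def sRec (N : ℕ) (t : ℝ) (a : ℕ → ℤ) : ℕ → ℝ
  | 0 => t
  | k + 1 => 1 - (N : ℝ) / ((a k : ℝ) + sRec N t a k)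

/-!
On the cylinder `I(b)` the map `R_N` is inverted by the Möbius map `φ_b(u) = 1 - N / (b + u)`, and
a change of variables shows that `φ_b` pushes `ρ^{φ_b(t)}_N` to a constant multiple of `ρ^t_N`
restricted to `I(b)`. Removing the first digit therefore replaces `t` by `φ_{a_1}(t)` at the cost
of a factor that does not depend on the event being measured. By induction, conditionally on
`I(a_1, …, a_n)`, the point `R_N^n(y)` has law `ρ^s_N` with
`s = φ_{a_n}(⋯ φ_{a_1}(t) ⋯) = s^t_{N,n}`, and the formula is the distribution function of this law.
-/

/-- The density of `ρ^t_N` on `[0,1]`, with the parameter `N` replaced by a real number `c`. -/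
noncomputable def rhoDensity (c t x : ℝ) : ℝ :=
  c * (c - 1 + t) / (c - (1 - x) * (1 - t)) ^ 2

/-- The inverse branch `u ↦ 1 - c / (b + u)` of the Rényi map (with `c = N`) on the points with
first digit `b`. The recursion defining `s^t_{N,k}` iterates the same maps. -/
noncomputable def renyiBranch (c b u : ℝ) : ℝ :=
  1 - c / (b + u)

section Density

variable {c t x : ℝ}

lemma rhoDensity_nonneg (hc : 0 < c) (ht : 1 < c + t) (x : ℝ) : 0 ≤ rhoDensity c t x :=
  div_nonneg (mul_nonneg hc.le (by linarith)) (sq_nonneg _)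

lemma sub_mul_one_sub_pos (hc : 0 < c) (ht : 1 < c + t) (hx : x ∈ Icc (0 : ℝ) 1) :
    0 < c - (1 - x) * (1 - t) := by
  -- The affine function of `x` takes the positive values `c + t - 1` at `0` and `c` at `1`.
  rcases hx.1.eq_or_lt with rfl | hx0
  · linarith
  · nlinarith [mul_pos hc hx0, mul_nonneg (sub_nonneg.2 hx.2) (sub_pos.2 ht).le]

lemma hasDerivAt_mul_div_sub_mul_one_sub (hx : c - (1 - x) * (1 - t) ≠ 0) :
    HasDerivAt (fun y => c * y / (c - (1 - y) * (1 - t))) (rhoDensity c t x) x := by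
  have hnum : HasDerivAt (fun y : ℝ => c * y) c x := by
    simpa using (hasDerivAt_id x).const_mul c
  have hden : HasDerivAt (fun y : ℝ => c - (1 - y) * (1 - t)) (1 - t) x := by
    simpa using (((hasDerivAt_id x).const_sub 1).mul_const (1 - t)).const_sub c
  refine (hnum.div hden hx).congr_deriv ?_
  unfold rhoDensity
  ring

lemma continuousOn_rhoDensity (hc : 0 < c) (ht : 1 < c + t) :
    ContinuousOn (rhoDensity c t) (Icc 0 1) :=
  ContinuousOn.div (by fun_prop) (by fun_prop) fun _ hx =>
    pow_ne_zero _ (sub_mul_one_sub_pos hc ht hx).ne'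

lemma integral_rhoDensity (hc : 0 < c) (ht : 1 < c + t) (hx : x ∈ Icc (0 : ℝ) 1) :
    ∫ y in 0..x, rhoDensity c t y = c * x / (c - (1 - x) * (1 - t)) := by
  have hsub : uIcc 0 x ⊆ Icc 0 1 := by
    rw [uIcc_of_le hx.1]
    exact Icc_subset_Icc_right hx.2
  rw [intervalIntegral.integral_eq_sub_of_hasDerivAt
    (fun y hy => hasDerivAt_mul_div_sub_mul_one_sub (sub_mul_one_sub_pos hc ht (hsub hy)).ne')
    ((continuousOn_rhoDensity hc ht).mono hsub).intervalIntegrable]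
  simp

end Density

section Branch

variable {c b t u : ℝ}

lemma div_one_sub_renyiBranch (hc : c ≠ 0) (b u : ℝ) : c / (1 - renyiBranch c b u) = b + u := by
  rw [renyiBranch, sub_sub_cancel, div_div_cancel₀ hc]

lemma renyiBranch_injective (hc : c ≠ 0) (b : ℝ) : Function.Injective (renyiBranch c b) := by
  intro u v huv
  have h := congrArg (fun z => c / (1 - z)) huv
  simpa only [div_one_sub_renyiBranch hc, add_right_inj] using h

lemma measurable_renyiBranch (c b : ℝ) : Measurable (renyiBranch c b) := by
  unfold renyiBranch
  fun_prop

lemma renyiBranch_mem_Icc (hc : 0 ≤ c) (hb : c ≤ b) (hu : 0 ≤ u) :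
    renyiBranch c b u ∈ Icc (0 : ℝ) 1 :=
  ⟨sub_nonneg.2 (div_le_one_of_le₀ (by linarith) (by linarith)),
    sub_le_self _ (div_nonneg hc (by linarith))⟩

lemma one_lt_add_renyiBranch (hc : 0 < c) (hb : 1 < b + t) : 1 < c + renyiBranch c b t := by
  have : c / (b + t) < c := div_lt_self hc hb
  unfold renyiBranch
  linarith

lemma hasDerivAt_renyiBranch (hu : b + u ≠ 0) :
    HasDerivAt (renyiBranch c b) (c / (b + u) ^ 2) u := by
  refine (((((hasDerivAt_id u).const_add b).inv hu).const_mul c).const_sub 1).congr_deriv ?_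
  simp only [id]
  ring

/- Up to the factor `b + u`, the right-hand side is symmetric in `t` and `u`: this is why a branch
carries the family of densities to itself, with `t` replaced by `renyiBranch c b t`. -/
lemma sub_one_sub_renyiBranch_mul (hu : b + u ≠ 0) :
    c - (1 - renyiBranch c b u) * (1 - t) = c * (b + t + u - 1) / (b + u) := by
  unfold renyiBranch
  field_simp
  ring

lemma abs_deriv_mul_rhoDensity_renyiBranch (hc : 0 < c) (hb : 1 < b + t) (hu : 0 ≤ u)
    (hbu : 0 < b + u) :
    |c / (b + u) ^ 2| * rhoDensity c t (renyiBranch c b u) =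
      (c - 1 + t) / ((b + t - 1) * (b + t)) * rhoDensity c (renyiBranch c b t) u := by
  have hbt : 0 < b + t := by linarith
  have hbt' : 0 < b + t - 1 := by linarith
  have hbtu : 0 < b + t + u - 1 := by linarith
  have hleft := sub_one_sub_renyiBranch_mul (c := c) (t := t) hbu.ne'
  have hright : c - (1 - u) * (1 - renyiBranch c b t) = c * (b + t + u - 1) / (b + t) := by
    rw [mul_comm, sub_one_sub_renyiBranch_mul hbt.ne', add_right_comm]
  have hmass : c - 1 + renyiBranch c b t = c * (b + t - 1) / (b + t) := by
    unfold renyiBranch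
    field_simp
    ring
  rw [abs_of_nonneg (by positivity), rhoDensity, rhoDensity, hleft, hright, hmass]
  field_simp

end Branch

section RenyiMap

variable {N : ℕ}

lemma RN_eq_fract (N : ℕ) (x : ℝ) : RN N x = Int.fract (N / (1 - x)) := by
  unfold RN
  split_ifs with hx
  · -- Here `N / (1 - x)` is the junk value `N / 0 = 0`.
    simp [hx]
  · rfl

lemma measurable_RN (N : ℕ) : Measurable (RN N) := by
  rw [funext (RN_eq_fract N)]
  fun_prop

lemma RN_renyiBranch (hN : N ≠ 0) (b : ℤ) {u : ℝ} (hu : u ∈ Ico (0 : ℝ) 1) :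
    RN N (renyiBranch N b u) = u := by
  rw [RN_eq_fract, div_one_sub_renyiBranch (mod_cast hN), Int.fract_intCast_add,
    Int.fract_eq_self.2 hu]

lemma floor_div_one_sub_renyiBranch (hN : N ≠ 0) (b : ℤ) {u : ℝ} (hu : u ∈ Ico (0 : ℝ) 1) :
    ⌊(N : ℝ) / (1 - renyiBranch N b u)⌋ = b := by
  rw [div_one_sub_renyiBranch (mod_cast hN), Int.floor_intCast_add, Int.floor_eq_zero_iff.2 hu,
    add_zero]

lemma renyiBranch_floor_RN (hN : N ≠ 0) (x : ℝ) :
    renyiBranch N ⌊(N : ℝ) / (1 - x)⌋ (RN N x) = x := by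
  rw [RN_eq_fract, renyiBranch, Int.floor_add_fract, div_div_cancel₀ (mod_cast hN), sub_sub_cancel]

lemma irrational_RN (hN : N ≠ 0) {x : ℝ} (hx : Irrational x) : Irrational (RN N x) := by
  have h : Irrational (N / (1 - x)) := by
    simpa using (hx.natCast_sub 1).natCast_div hN
  rw [RN_eq_fract]
  exact h.sub_intCast _

lemma irrational_renyiBranch (hN : N ≠ 0) (b : ℤ) {u : ℝ} (hu : Irrational u) :
    Irrational (renyiBranch N b u) := by
  simpa [renyiBranch] using ((hu.intCast_add b).natCast_div hN).natCast_sub 1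

end RenyiMap

section Cylinder

variable {N : ℕ}

lemma measurable_digit (N k : ℕ) : Measurable (digit N k) := by
  have := (measurable_RN N).iterate k
  unfold digit
  exact Int.measurable_floor.comp (by fun_prop)

lemma measurableSet_cyl (N n : ℕ) (a : ℕ → ℤ) : MeasurableSet (cyl N n a) := by
  have hirr : MeasurableSet {x : ℝ | Irrational x} :=
    (countable_range ((↑) : ℚ → ℝ)).measurableSet.compl
  have hdigit : MeasurableSet {x | ∀ k < n, digit N k x = a k} := by
    simp only [ofPred_forall]
    exact .iInter fun k => .iInter fun _ => measurable_digit N k (measurableSet_singleton _)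
  exact measurableSet_Icc.inter (hirr.inter hdigit)

lemma cyl_subset_Ico (N n : ℕ) (a : ℕ → ℤ) : cyl N n a ⊆ Ico 0 1 :=
  fun _ hx => ⟨hx.1.1, hx.1.2.lt_of_ne hx.2.1.ne_one⟩

lemma RN_mem_cyl_of_mem_cyl_succ (hN : N ≠ 0) {n : ℕ} {a : ℕ → ℤ} {x : ℝ}
    (hx : x ∈ cyl N (n + 1) a) : RN N x ∈ cyl N n fun k => a (k + 1) := by
  obtain ⟨-, hirr, hdigit⟩ := hx
  refine ⟨?_, irrational_RN hN hirr, fun k hk => hdigit (k + 1) (by lia)⟩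
  rw [RN_eq_fract]
  exact ⟨Int.fract_nonneg _, (Int.fract_lt_one _).le⟩

lemma renyiBranch_mem_cyl_succ (hN : N ≠ 0) {n : ℕ} {a : ℕ → ℤ} (ha : (N : ℤ) ≤ a 0) {u : ℝ}
    (hu : u ∈ cyl N n fun k => a (k + 1)) : renyiBranch N (a 0) u ∈ cyl N (n + 1) a := by
  have hu01 := cyl_subset_Ico N n _ hu
  refine ⟨renyiBranch_mem_Icc N.cast_nonneg (mod_cast ha) hu01.1,
    irrational_renyiBranch hN _ hu.2.1, fun k hk => ?_⟩
  cases k with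
  | zero => exact floor_div_one_sub_renyiBranch hN _ hu01
  | succ k =>
    rw [digit, Function.iterate_succ_apply, RN_renyiBranch hN _ hu01]
    exact hu.2.2 k (by lia)

lemma cyl_succ_inter_preimage_iterate (hN : N ≠ 0) (n : ℕ) {a : ℕ → ℤ} (ha : (N : ℤ) ≤ a 0)
    (B : Set ℝ) :
    cyl N (n + 1) a ∩ (RN N)^[n + 1] ⁻¹' B =
      renyiBranch N (a 0) '' (cyl N n (fun k => a (k + 1)) ∩ (RN N)^[n] ⁻¹' B) := by
  apply Subset.antisymm
  · rintro y ⟨hy, hB⟩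
    have hfirst : ⌊(N : ℝ) / (1 - y)⌋ = a 0 := hy.2.2 0 n.succ_pos
    exact ⟨RN N y, ⟨RN_mem_cyl_of_mem_cyl_succ hN hy, hB⟩, hfirst ▸ renyiBranch_floor_RN hN y⟩
  · rintro _ ⟨u, ⟨hu, hB⟩, rfl⟩
    refine ⟨renyiBranch_mem_cyl_succ hN ha hu, ?_⟩
    rwa [mem_preimage, Function.iterate_succ_apply, RN_renyiBranch hN _ (cyl_subset_Ico N n _ hu)]

end Cylinder

section RhoMeasure

variable {N : ℕ} {t : ℝ}

lemma rhoT_apply (N : ℕ) (t : ℝ) {A : Set ℝ} (hA : MeasurableSet A) :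
    rhoT N t A = ∫⁻ y in A ∩ Icc 0 1, ENNReal.ofReal (rhoDensity N t y) := by
  rw [rhoT, withDensity_apply _ hA, Measure.restrict_restrict hA]
  rfl

lemma rhoT_Iio (hN : 0 < N) (ht : 1 < N + t) {x : ℝ} (hx : x ∈ Icc (0 : ℝ) 1) :
    rhoT N t (Iio x) = ENNReal.ofReal (N * x / (N - (1 - x) * (1 - t))) := by
  have hc : (0 : ℝ) < N := mod_cast hN
  have hIco : Iio x ∩ Icc 0 1 = Ico 0 x := by
    ext y
    exact ⟨fun h => ⟨h.2.1, h.1⟩, fun h => ⟨h.2, h.1, h.2.le.trans hx.2⟩⟩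
  have hint : IntegrableOn (rhoDensity N t) (Ico 0 x) :=
    (continuousOn_rhoDensity hc ht).integrableOn_Icc.mono_set
      (Ico_subset_Icc_self.trans (Icc_subset_Icc_right hx.2))
  rw [rhoT_apply N t measurableSet_Iio, hIco,
    ← ofReal_integral_eq_lintegral_ofReal hint (.of_forall (rhoDensity_nonneg hc ht)),
    integral_Ico_eq_integral_Ioc, ← intervalIntegral.integral_of_le hx.1,
    integral_rhoDensity hc ht hx]

lemma rhoT_real_Iio (hN : 0 < N) (ht : 1 < N + t) {x : ℝ} (hx : x ∈ Icc (0 : ℝ) 1) :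
    (rhoT N t).real (Iio x) = N * x / (N - (1 - x) * (1 - t)) := by
  rw [measureReal_def, rhoT_Iio hN ht hx, ENNReal.toReal_ofReal]
  exact div_nonneg (mul_nonneg N.cast_nonneg hx.1)
    (sub_mul_one_sub_pos (mod_cast hN) ht hx).le

lemma ae_mem_cyl_zero (N : ℕ) (t : ℝ) (a : ℕ → ℤ) : ∀ᵐ y ∂rhoT N t, y ∈ cyl N 0 a := by
  have hirr : ∀ᵐ y : ℝ, Irrational y :=
    compl_mem_ae_iff.2 ((countable_range ((↑) : ℚ → ℝ)).measure_zero volume)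
  refine (withDensity_absolutelyContinuous _ _).ae_le ?_
  filter_upwards [ae_restrict_of_ae hirr, ae_restrict_mem measurableSet_Icc] with y hy hmem
  exact ⟨hmem, hy, by simp⟩

lemma rhoT_cyl_zero_inter (N : ℕ) (t : ℝ) (a : ℕ → ℤ) (B : Set ℝ) :
    rhoT N t (cyl N 0 a ∩ B) = rhoT N t B := by
  rw [inter_comm]
  exact measure_inter_conull (ae_mem_cyl_zero N t a)

lemma rhoT_cyl_zero (hN : 0 < N) (ht : 1 < N + t) (a : ℕ → ℤ) : rhoT N t (cyl N 0 a) = 1 := by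
  have hsub : cyl N 0 a ⊆ Iio 1 := (cyl_subset_Ico N 0 a).trans Ico_subset_Iio_self
  have hc : (N : ℝ) ≠ 0 := mod_cast hN.ne'
  rw [← inter_eq_left.2 hsub, rhoT_cyl_zero_inter, rhoT_Iio hN ht (right_mem_Icc.2 zero_le_one)]
  simp [hc]

lemma rhoT_image_renyiBranch (hN : 0 < N) (ht : 1 < N + t) {b : ℝ} (hb : N ≤ b) {A : Set ℝ}
    (hA : MeasurableSet A) (hA01 : A ⊆ Icc 0 1) :
    rhoT N t (renyiBranch N b '' A) =
      ENNReal.ofReal ((N - 1 + t) / ((b + t - 1) * (b + t))) *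
        rhoT N (renyiBranch N b t) A := by
  have hc : (0 : ℝ) < N := mod_cast hN
  have hbu : ∀ u ∈ A, 0 < b + u := fun u hu => by linarith [(hA01 hu).1]
  have hinj : InjOn (renyiBranch N b) A := (renyiBranch_injective hc.ne' b).injOn
  have himage : MeasurableSet (renyiBranch N b '' A) :=
    hA.image_of_measurable_injOn (measurable_renyiBranch N b) hinj
  have hsub : renyiBranch N b '' A ⊆ Icc 0 1 :=
    image_subset_iff.2 fun u hu => renyiBranch_mem_Icc hc.le hb (hA01 hu).1
  have hfactor : 0 ≤ (N - 1 + t) / ((b + t - 1) * (b + t)) :=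
    div_nonneg (by linarith) (mul_nonneg (by linarith) (by linarith))
  rw [rhoT_apply N t himage, rhoT_apply N _ hA, inter_eq_left.2 hsub, inter_eq_left.2 hA01,
    lintegral_image_eq_lintegral_abs_deriv_mul hA
      (fun u hu => (hasDerivAt_renyiBranch (hbu u hu).ne').hasDerivWithinAt) hinj,
    ← lintegral_const_mul' _ _ ENNReal.ofReal_ne_top]
  refine setLIntegral_congr_fun hA fun u hu => ?_
  simp only [← ENNReal.ofReal_mul (abs_nonneg _), ← ENNReal.ofReal_mul hfactor]
  rw [abs_deriv_mul_rhoDensity_renyiBranch hc (by linarith) (hA01 hu).1 (hbu u hu)]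

end RhoMeasure

lemma sRec_succ_eq_sRec_renyiBranch (N : ℕ) (t : ℝ) (a : ℕ → ℤ) (n : ℕ) :
    sRec N t a (n + 1) = sRec N (renyiBranch N (a 0) t) (fun k => a (k + 1)) n := by
  induction n with
  | zero => rfl
  | succ n ih =>
    rw [sRec, ih]
    rfl

lemma one_lt_add_sRec {N : ℕ} (hN : 0 < N) {t : ℝ} (ht : 1 < N + t) {n : ℕ} {a : ℕ → ℤ}
    (ha : ∀ k < n, (N : ℤ) ≤ a k) : 1 < N + sRec N t a n := by
  induction n with
  | zero => exact ht
  | succ n ih =>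
    have hlast : (N : ℝ) ≤ a n := mod_cast ha n n.lt_succ_self
    have hprev : 1 < N + sRec N t a n := ih fun k hk => ha k (by lia)
    exact one_lt_add_renyiBranch (mod_cast hN) (by linarith)

theorem stmt0_general {N : ℕ} (hN : 0 < N) {t : ℝ} (ht : 1 < N + t) {n : ℕ} {a : ℕ → ℤ}
    (ha : ∀ k < n, (N : ℤ) ≤ a k) {B : Set ℝ} (hB : MeasurableSet B) :
    rhoT N t (cyl N n a ∩ (RN N)^[n] ⁻¹' B) =
      rhoT N t (cyl N n a) * rhoT N (sRec N t a n) B := by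
  induction n generalizing t a with
  | zero =>
    rw [rhoT_cyl_zero hN ht, one_mul]
    exact rhoT_cyl_zero_inter N t a B
  | succ n ih =>
    have hfirst : (N : ℤ) ≤ a 0 := ha 0 n.succ_pos
    have hfirst' : (N : ℝ) ≤ a 0 := mod_cast hfirst
    let a' : ℕ → ℤ := fun k => a (k + 1)
    let t' := renyiBranch N (a 0) t
    let κ := ENNReal.ofReal ((N - 1 + t) / ((a 0 + t - 1) * (a 0 + t)))
    have hshift : ∀ C, MeasurableSet C → rhoT N t (cyl N (n + 1) a ∩ (RN N)^[n + 1] ⁻¹' C) =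
        κ * rhoT N t' (cyl N n a' ∩ (RN N)^[n] ⁻¹' C) := fun C hC => by
      rw [cyl_succ_inter_preimage_iterate hN.ne' n hfirst]
      exact rhoT_image_renyiBranch hN ht hfirst'
        ((measurableSet_cyl N n a').inter ((measurable_RN N).iterate n hC)) fun y hy => hy.1.1
    have hcyl : rhoT N t (cyl N (n + 1) a) = κ * rhoT N t' (cyl N n a') := by
      simpa only [preimage_univ, inter_univ] using hshift univ .univ
    have ht' : 1 < N + t' := one_lt_add_renyiBranch (mod_cast hN) (by linarith)
    rw [hshift B hB, ih ht' fun k hk => ha (k + 1) (by lia), hcyl, mul_assoc,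
      sRec_succ_eq_sRec_renyiBranch]

theorem stmt0 (N : ℕ) (hN : 2 ≤ N) (t : ℝ) (ht : t ∈ Set.Icc (0 : ℝ) 1)
    (n : ℕ) (hn : 1 ≤ n) (a : ℕ → ℤ) (ha : ∀ k < n, (N : ℤ) ≤ a k)
    (x : ℝ) (hx : x ∈ Set.Icc (0 : ℝ) 1) :
    (rhoT N t {y | y ∈ cyl N n a ∧ (RN N)^[n] y < x}).toReal
      = (rhoT N t (cyl N n a)).toReal
        * ((N : ℝ) * x / ((N : ℝ) - (1 - x) * (1 - sRec N t a n))) := by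
  have hN' : 0 < N := by lia
  have ht' : 1 < N + t := by
    have : (2 : ℝ) ≤ N := mod_cast hN
    linarith [ht.1]
  rw [← rhoT_real_Iio hN' (one_lt_add_sRec hN' ht' ha) hx, measureReal_def, ← ENNReal.toReal_mul,
    ← stmt0_general hN' ht' ha measurableSet_Iio]
  rfl
end

section
/- Fix an integer N ≥ 2. For all Borel sets A, B ⊆ [0,1], the extended measure satisfies the disintegration formula ρ̄_N(A × B) = ∫_B ρ^y_N(A) dρ_N(y), where ρ^y_N(A) = ∫_A N(N−1+y)/[N − (1−x)(1−y)]² dx. -/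
open MeasureTheory Set Real Filter

/-- The invariant probability measure `ρ_N`, with density
`(log(N/(N-1)))⁻¹/(x+N-1)` on `[0,1]`. -/
noncomputable def rhoN (N : ℕ) : Measure ℝ :=
  (volume.restrict (Set.Icc (0 : ℝ) 1)).withDensity fun x =>
    ENNReal.ofReal ((Real.log ((N : ℝ) / ((N : ℝ) - 1)))⁻¹ / (x + (N : ℝ) - 1))

/-- The extended measure `ρ̄_N` on the unit square. -/
noncomputable def rhoBar (N : ℕ) : Measure (ℝ × ℝ) :=
  (((volume.restrict (Set.Icc (0 : ℝ) 1)).prod (volume.restrict (Set.Icc (0 : ℝ) 1))).withDensity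
    fun p => ENNReal.ofReal
      ((Real.log ((N : ℝ) / ((N : ℝ) - 1)))⁻¹ * ((N : ℝ)
        / ((N : ℝ) - (1 - p.1) * (1 - p.2)) ^ 2)))

/-!
The density of `ρ̄_N` at `(x, y)` is the density of `ρ_N` at `y` times the density of `ρ^y_N` at
`x`, so Tonelli's theorem gives the disintegration formula for `[0,∞]`-valued integrals. For
`y ∈ [0,1]` the density of `ρ^y_N` is continuous on `[0,1]`, hence `ρ^y_N` is finite and the formula
passes to the Bochner integral.
-/

section WithDensity

variable {α β : Type*} [MeasurableSpace α] [MeasurableSpace β]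

theorem measurable_withDensity_apply (μ : Measure α) [SFinite μ] {h : β → α → ENNReal}
    (hh : Measurable (Function.uncurry h)) (A : Set α) :
    Measurable fun y => μ.withDensity (h y) A := by
  simp only [withDensity_apply']
  exact hh.lintegral_prod_right'

theorem withDensity_mul_apply_prod (μ : Measure α) (ν : Measure β) [SFinite μ] [SFinite ν]
    {g : β → ENNReal} {h : β → α → ENNReal} (hg : Measurable g)
    (hh : Measurable (Function.uncurry h)) (A : Set α) (B : Set β) :
    ((μ.prod ν).withDensity fun p => g p.2 * h p.2 p.1) (A ×ˢ B) =
      ∫⁻ y in B, μ.withDensity (h y) A ∂(ν.withDensity g) := by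
  have h_meas : Measurable fun p : α × β => h p.2 p.1 := hh.comp measurable_swap
  calc ((μ.prod ν).withDensity fun p => g p.2 * h p.2 p.1) (A ×ˢ B)
      = ∫⁻ p, g p.2 * h p.2 p.1 ∂(μ.restrict A).prod (ν.restrict B) := by
        rw [withDensity_apply', Measure.prod_restrict]
    _ = ∫⁻ y in B, ∫⁻ x in A, g y * h y x ∂μ ∂ν :=
        lintegral_prod_symm' _ ((hg.comp measurable_snd).mul h_meas)
    _ = ∫⁻ y in B, g y * μ.withDensity (h y) A ∂ν := by
        simp only [lintegral_const_mul _ hh.of_uncurry_left, withDensity_apply']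
    _ = ∫⁻ y in B, μ.withDensity (h y) A ∂(ν.withDensity g) := by
        rw [restrict_withDensity', lintegral_withDensity_eq_lintegral_mul _ hg
          (measurable_withDensity_apply μ hh A)]
        rfl

end WithDensity

theorem sub_one_sub_mul_one_sub_pos {a x y : ℝ} (ha : 1 < a) (hx : 0 ≤ x)
    (hy : y ∈ Icc (0 : ℝ) 1) : 0 < a - (1 - x) * (1 - y) := by
  have h_mul : (1 - x) * (1 - y) ≤ 1 :=
    mul_le_one₀ (by linarith) (by linarith [hy.2]) (by linarith [hy.1])
  linarith

theorem inv_log_div_sub_one_nonneg {a : ℝ} (ha : 1 < a) : 0 ≤ (log (a / (a - 1)))⁻¹ := by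
  refine inv_nonneg.2 (log_nonneg ?_)
  rw [one_le_div (by linarith)]
  linarith

/-- The density of `ρ_N` on `[0,1]`, with `N` replaced by a real parameter `a`. -/
noncomputable def invariantDensity (a y : ℝ) : ℝ :=
  (log (a / (a - 1)))⁻¹ / (y + a - 1)

/-- The density `h^t_N` of `ρ^t_N` on `[0,1]`, with `N` replaced by a real parameter `a`. -/
noncomputable def conditionalDensity (a t x : ℝ) : ℝ :=
  a * (a - 1 + t) / (a - (1 - x) * (1 - t)) ^ 2

/-- The density of `ρ̄_N` on the unit square, with `N` replaced by a real parameter `a`. -/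
noncomputable def extendedDensity (a x y : ℝ) : ℝ :=
  (log (a / (a - 1)))⁻¹ * (a / (a - (1 - x) * (1 - y)) ^ 2)

theorem extendedDensity_eq_mul {a y : ℝ} (h : y + a - 1 ≠ 0) (x : ℝ) :
    extendedDensity a x y = invariantDensity a y * conditionalDensity a y x := by
  unfold extendedDensity invariantDensity conditionalDensity
  field_simp
  ring

theorem invariantDensity_nonneg {a y : ℝ} (ha : 1 < a) (hy : 0 ≤ y) :
    0 ≤ invariantDensity a y :=
  div_nonneg (inv_log_div_sub_one_nonneg ha) (by linarith)

theorem measurable_invariantDensity (a : ℝ) : Measurable (invariantDensity a) := by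
  unfold invariantDensity
  fun_prop

theorem measurable_uncurry_conditionalDensity (a : ℝ) :
    Measurable (Function.uncurry (conditionalDensity a)) := by
  unfold Function.uncurry conditionalDensity
  fun_prop

theorem continuousOn_conditionalDensity {a t : ℝ} (ha : 1 < a) (ht : t ∈ Icc (0 : ℝ) 1) :
    ContinuousOn (conditionalDensity a t) (Icc 0 1) :=
  ContinuousOn.div (by fun_prop) (by fun_prop) fun _ hx =>
    pow_ne_zero 2 (sub_one_sub_mul_one_sub_pos ha hx.1 ht).ne'

theorem isFiniteMeasure_rhoT {N : ℕ} (hN : 2 ≤ N) {t : ℝ} (ht : t ∈ Icc (0 : ℝ) 1) :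
    IsFiniteMeasure (rhoT N t) :=
  isFiniteMeasure_withDensity_ofReal
    (continuousOn_conditionalDensity (Nat.one_lt_cast.2 hN) ht).integrableOn_Icc.hasFiniteIntegral

theorem measurable_rhoT_apply (N : ℕ) (A : Set ℝ) : Measurable fun t => rhoT N t A :=
  measurable_withDensity_apply _ (measurable_uncurry_conditionalDensity N).ennreal_ofReal A

theorem ae_rhoN_mem_Icc (N : ℕ) : ∀ᵐ y ∂rhoN N, y ∈ Icc (0 : ℝ) 1 :=
  (withDensity_absolutelyContinuous _ _).ae_le (ae_restrict_mem measurableSet_Icc)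

theorem rhoBar_eq_withDensity_mul {N : ℕ} (hN : 2 ≤ N) :
    rhoBar N =
      ((volume.restrict (Icc (0 : ℝ) 1)).prod (volume.restrict (Icc (0 : ℝ) 1))).withDensity
        fun p => ENNReal.ofReal (invariantDensity N p.2) *
          ENNReal.ofReal (conditionalDensity N p.2 p.1) := by
  have hN_one : (1 : ℝ) < N := Nat.one_lt_cast.2 hN
  have h_snd : ∀ᵐ p ∂(volume.restrict (Icc (0 : ℝ) 1)).prod (volume.restrict (Icc (0 : ℝ) 1)),
      p.2 ∈ Icc (0 : ℝ) 1 :=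
    Measure.quasiMeasurePreserving_snd.ae (ae_restrict_mem measurableSet_Icc)
  refine withDensity_congr_ae ?_
  filter_upwards [h_snd] with p hp
  have h_ne : p.2 + N - 1 ≠ 0 := by linarith [hp.1]
  rw [← ENNReal.ofReal_mul (invariantDensity_nonneg hN_one hp.1), ← extendedDensity_eq_mul h_ne,
    extendedDensity]

theorem rhoBar_apply_prod {N : ℕ} (hN : 2 ≤ N) (A B : Set ℝ) :
    rhoBar N (A ×ˢ B) = ∫⁻ y in B, rhoT N y A ∂(rhoN N) := by
  rw [rhoBar_eq_withDensity_mul hN]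
  exact withDensity_mul_apply_prod (h := fun y x => ENNReal.ofReal (conditionalDensity N y x)) _ _
    (measurable_invariantDensity N).ennreal_ofReal
    (measurable_uncurry_conditionalDensity N).ennreal_ofReal A B

theorem stmt3_general (N : ℕ) (hN : 2 ≤ N) (A B : Set ℝ) :
    (rhoBar N (A ×ˢ B)).toReal = ∫ y in B, (rhoT N y A).toReal ∂(rhoN N) := by
  have h_finite : ∀ᵐ y ∂(rhoN N).restrict B, rhoT N y A < ⊤ := by
    filter_upwards [ae_restrict_of_ae (ae_rhoN_mem_Icc N)] with y hy
    have := isFiniteMeasure_rhoT hN hy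
    exact measure_lt_top _ A
  rw [rhoBar_apply_prod hN, integral_toReal (measurable_rhoT_apply N A).aemeasurable h_finite]

theorem stmt3 (N : ℕ) (hN : 2 ≤ N) (A B : Set ℝ)
    (hA : MeasurableSet A) (hB : MeasurableSet B)
    (hA1 : A ⊆ Set.Icc (0 : ℝ) 1) (hB1 : B ⊆ Set.Icc (0 : ℝ) 1) :
    (rhoBar N (A ×ˢ B)).toReal = ∫ y in B, (rhoT N y A).toReal ∂(rhoN N) :=
  stmt3_general N hN A B
end

section
/- Fix an integer N ≥ 2. For every x ∈ [0,1], ρ_N([0,x]) = ∫_{[0,1]} Nx/(N − (1−x)(1−s)) dρ_N(s); equivalently, (log(N/(N−1)))^{−1} log((x+N−1)/(N−1)) = (log(N/(N−1)))^{−1} ∫_0^1 Nx / ((N − (1−x)(1−s))(s+N−1)) ds. -/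
open MeasureTheory Set Real Filter

/-!
Let `a > 1` be a real parameter in place of `N`. Multiplied by the unnormalized density
`1/(s+a-1)`, the kernel `ax / (a - (1-x)(1-s))` splits into partial fractions,
`ax / ((a - (1-x)(1-s)) (s+a-1)) = 1/(s+a-1) - (1-x)/((1-x)s + (x+a-1))`,
and integrating over `s ∈ [0,1]` gives `log (a/(a-1)) - log (a/(x+a-1)) = log ((x+a-1)/(a-1))`,
which is also the integral of `1/(s+a-1)` over `s ∈ [0,x]`.
-/

section Affine

lemma mul_add_pos_of_mem_uIcc {𝕜 : Type*} [Field 𝕜] [LinearOrder 𝕜] [IsStrictOrderedRing 𝕜]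
    {c d s u v : 𝕜} (hu : 0 < c * u + d) (hv : 0 < c * v + d) (hs : s ∈ uIcc u v) :
    0 < c * s + d := by
  obtain ⟨p, q, hp, hq, hpq, rfl⟩ := segment_eq_uIcc u v ▸ hs
  have hcomb : 0 < p * (c * u + d) + q * (c * v + d) := convex_Ioi (0 : 𝕜) hu hv hp hq hpq
  simp only [smul_eq_mul]
  linear_combination hcomb + d * hpq

variable {c d u v : ℝ}

lemma intervalIntegrable_div_mul_add (hu : 0 < c * u + d) (hv : 0 < c * v + d) :
    IntervalIntegrable (fun s ↦ c / (c * s + d)) volume u v :=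
  (continuousOn_const.div (by fun_prop) fun _ hs ↦
    (mul_add_pos_of_mem_uIcc hu hv hs).ne').intervalIntegrable

lemma integral_div_mul_add (hu : 0 < c * u + d) (hv : 0 < c * v + d) :
    ∫ s in u..v, c / (c * s + d) = log ((c * v + d) / (c * u + d)) := by
  simp only [div_eq_mul_inv c]
  rw [intervalIntegral.integral_const_mul,
    intervalIntegral.mul_integral_comp_mul_add (f := fun t ↦ t⁻¹), integral_inv_of_pos hu hv]

lemma intervalIntegrable_inv_add (hu : 0 < u + d) (hv : 0 < v + d) :
    IntervalIntegrable (fun s ↦ (s + d)⁻¹) volume u v := by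
  simpa only [one_mul, one_div] using
    intervalIntegrable_div_mul_add (c := 1) ((one_mul u).symm ▸ hu) ((one_mul v).symm ▸ hv)

lemma integral_inv_add (hu : 0 < u + d) (hv : 0 < v + d) :
    ∫ s in u..v, (s + d)⁻¹ = log ((v + d) / (u + d)) := by
  rw [intervalIntegral.integral_comp_add_right fun t ↦ t⁻¹, integral_inv_of_pos hu hv]

end Affine

lemma kernel_div_eq_inv_sub_div {𝕜 : Type*} [Field 𝕜] {a s x : 𝕜} (hdensity : s + (a - 1) ≠ 0)
    (hkernel : (1 - x) * s + (x + a - 1) ≠ 0) :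
    a * x / ((a - (1 - x) * (1 - s)) * (s + a - 1)) =
      (s + (a - 1))⁻¹ - (1 - x) / ((1 - x) * s + (x + a - 1)) := by
  rw [show a - (1 - x) * (1 - s) = (1 - x) * s + (x + a - 1) by ring, add_sub_assoc s,
    inv_eq_one_div, div_sub_div _ _ hdensity hkernel, mul_comm (s + (a - 1))]
  ring

lemma integral_kernel_div {a x : ℝ} (ha : 1 < a) (hx : 1 - a < x) :
    ∫ s in (0 : ℝ)..1, a * x / ((a - (1 - x) * (1 - s)) * (s + a - 1)) =
      log ((x + a - 1) / (a - 1)) := by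
  have ha₀ : a ≠ 0 := by linarith
  have hd : a - 1 ≠ 0 := by linarith
  have hxd : x + a - 1 ≠ 0 := by linarith
  have hd₀ : 0 < 0 + (a - 1) := by linarith
  have hd₁ : 0 < 1 + (a - 1) := by linarith
  have hxd₀ : 0 < (1 - x) * 0 + (x + a - 1) := by linarith
  have hxd₁ : 0 < (1 - x) * 1 + (x + a - 1) := by linarith
  calc
    _ = ∫ s in (0 : ℝ)..1, ((s + (a - 1))⁻¹ - (1 - x) / ((1 - x) * s + (x + a - 1))) :=
      intervalIntegral.integral_congr fun s hs ↦ kernel_div_eq_inv_sub_div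
        (by rw [uIcc_of_le zero_le_one] at hs; linarith [hs.1])
        (mul_add_pos_of_mem_uIcc hxd₀ hxd₁ hs).ne'
    _ = log (a / (a - 1)) - log (a / (x + a - 1)) := by
      rw [intervalIntegral.integral_sub (intervalIntegrable_inv_add hd₀ hd₁)
          (intervalIntegrable_div_mul_add hxd₀ hxd₁),
        integral_inv_add hd₀ hd₁, integral_div_mul_add hxd₀ hxd₁]
      ring_nf
    _ = log ((x + a - 1) / (a - 1)) := by
      rw [log_div ha₀ hd, log_div ha₀ hxd, log_div hxd hd]
      ring

/-- The measure `ρ_a` for a real parameter `a > 1`, with the density of `rhoN` where the integer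
`N` is replaced by `a`; `rhoN N` unfolds to `rhoReal N`. -/
noncomputable def rhoReal (a : ℝ) : Measure ℝ :=
  (volume.restrict (Icc (0 : ℝ) 1)).withDensity fun x ↦
    ENNReal.ofReal ((log (a / (a - 1)))⁻¹ / (x + a - 1))

namespace rhoReal

lemma restrict_Icc_zero_one (a : ℝ) : (rhoReal a).restrict (Icc 0 1) = rhoReal a := by
  rw [rhoReal, restrict_withDensity measurableSet_Icc,
    Measure.restrict_restrict measurableSet_Icc, inter_self]

variable {a : ℝ}

section Integral

variable {E : Type*} [NormedAddCommGroup E] [NormedSpace ℝ E]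

lemma setIntegral_Icc_eq_smul_intervalIntegral (ha : 1 < a) {u v : ℝ} (hu : 0 ≤ u)
    (huv : u ≤ v) (hv : v ≤ 1) (g : ℝ → E) :
    ∫ s in Icc u v, g s ∂rhoReal a =
      (log (a / (a - 1)))⁻¹ • ∫ s in u..v, (s + a - 1)⁻¹ • g s := by
  have hlog : 0 ≤ log (a / (a - 1)) :=
    log_nonneg <| (one_le_div (sub_pos.2 ha)).2 (by linarith)
  rw [rhoReal, setIntegral_withDensity_eq_setIntegral_toReal_smul (by fun_prop)
      (.of_forall fun _ ↦ ENNReal.ofReal_lt_top) _ measurableSet_Icc,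
    Measure.restrict_restrict measurableSet_Icc, inter_eq_left.2 (Icc_subset_Icc hu hv),
    intervalIntegral.integral_of_le huv, ← integral_Icc_eq_integral_Ioc, ← integral_smul]
  refine setIntegral_congr_fun measurableSet_Icc fun s hs ↦ ?_
  have hs₀ : 0 ≤ s + a - 1 := by linarith [hs.1]
  simp only [ENNReal.toReal_ofReal (div_nonneg (inv_nonneg.2 hlog) hs₀)]
  rw [div_eq_mul_inv _ (s + a - 1), mul_smul]

lemma integral_eq_smul_intervalIntegral (ha : 1 < a) (g : ℝ → E) :
    ∫ s, g s ∂rhoReal a =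
      (log (a / (a - 1)))⁻¹ • ∫ s in (0 : ℝ)..1, (s + a - 1)⁻¹ • g s := by
  rw [← setIntegral_Icc_eq_smul_intervalIntegral ha le_rfl zero_le_one le_rfl,
    restrict_Icc_zero_one]

end Integral

lemma real_Icc (ha : 1 < a) {u v : ℝ} (hu : 0 ≤ u) (huv : u ≤ v) (hv : v ≤ 1) :
    (rhoReal a).real (Icc u v) =
      (log (a / (a - 1)))⁻¹ * log ((v + a - 1) / (u + a - 1)) := by
  have hlog : ∫ s in u..v, (s + a - 1)⁻¹ = log ((v + a - 1) / (u + a - 1)) := by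
    simpa only [add_sub_assoc] using integral_inv_add (d := a - 1) (by linarith) (by linarith)
  simpa only [setIntegral_const, smul_eq_mul, mul_one, hlog] using
    setIntegral_Icc_eq_smul_intervalIntegral ha hu huv hv fun _ ↦ (1 : ℝ)

end rhoReal

theorem stmt5_general (a : ℝ) (ha : 1 < a) (x : ℝ) (hx : x ∈ Icc (0 : ℝ) 1) :
    (rhoReal a (Icc 0 x)).toReal = (∫ s, a * x / (a - (1 - x) * (1 - s)) ∂rhoReal a) ∧
    (log (a / (a - 1)))⁻¹ * log ((x + a - 1) / (a - 1)) =
      (log (a / (a - 1)))⁻¹ *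
        ∫ s in (0 : ℝ)..1, a * x / ((a - (1 - x) * (1 - s)) * (s + a - 1)) := by
  have hkernel := integral_kernel_div ha (by linarith [hx.1] : 1 - a < x)
  refine ⟨?_, by rw [hkernel]⟩
  calc
    _ = (log (a / (a - 1)))⁻¹ * log ((x + a - 1) / (a - 1)) := by
      simpa only [zero_add, measureReal_def] using rhoReal.real_Icc ha le_rfl hx.1 hx.2
    _ = ∫ s, a * x / (a - (1 - x) * (1 - s)) ∂rhoReal a := by
      simp only [← hkernel, rhoReal.integral_eq_smul_intervalIntegral ha, smul_eq_mul,
        inv_mul_eq_div, div_div]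

theorem stmt5 (N : ℕ) (hN : 2 ≤ N) (x : ℝ) (hx : x ∈ Set.Icc (0 : ℝ) 1) :
    (rhoN N (Set.Icc 0 x)).toReal
      = (∫ s, (N : ℝ) * x / ((N : ℝ) - (1 - x) * (1 - s)) ∂(rhoN N)) ∧
    (Real.log ((N : ℝ) / ((N : ℝ) - 1)))⁻¹ * Real.log ((x + (N : ℝ) - 1) / ((N : ℝ) - 1))
      = (Real.log ((N : ℝ) / ((N : ℝ) - 1)))⁻¹
        * ∫ s in (0 : ℝ)..1,
            (N : ℝ) * x / (((N : ℝ) - (1 - x) * (1 - s)) * (s + (N : ℝ) - 1)) :=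
  stmt5_general N (Nat.one_lt_cast.2 hN) x hx
end

section
/- For every integer N ≥ 2 and all x, t ∈ [0,1], N − 1 ≤ N(N−1+t)(N−1+x)/[N − (1−x)(1−t)]² ≤ N. -/
open MeasureTheory Set Real Filter

/-!
Put `a = 1 - x` and `b = 1 - t`, so that the quotient is `n (n - a) (n - b) / (n - a b) ^ 2`.
The upper bound holds because `a b` is at most `a` and at most `b`. The lower bound rests on the
identity `(n - a) (n - b) - (n - 1) (n - a b) = n (1 - a) (1 - b)`, together with `n - a b ≤ n`.
-/

section OrderedRing

variable {R : Type*} [CommRing R] [PartialOrder R] [IsOrderedRing R] {n a b : R}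

theorem sub_one_mul_sub_mul_le_sub_mul_sub (hn : 0 ≤ n) (hab : 0 ≤ (1 - a) * (1 - b)) :
    (n - 1) * (n - a * b) ≤ (n - a) * (n - b) :=
  sub_nonneg.1 <| calc
    0 ≤ n * ((1 - a) * (1 - b)) := mul_nonneg hn hab
    _ = (n - a) * (n - b) - (n - 1) * (n - a * b) := by ring

theorem sub_one_mul_sub_mul_sq_le (hn : 1 ≤ n) (hab : 0 ≤ a * b) (habn : a * b ≤ n)
    (hab' : 0 ≤ (1 - a) * (1 - b)) :
    (n - 1) * (n - a * b) ^ 2 ≤ n * (n - a) * (n - b) := by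
  have hn₀ : 0 ≤ n := zero_le_one.trans hn
  have hprod : 0 ≤ (n - 1) * (n - a * b) := mul_nonneg (sub_nonneg.2 hn) (sub_nonneg.2 habn)
  calc
    (n - 1) * (n - a * b) ^ 2 = (n - a * b) * ((n - 1) * (n - a * b)) := by ring
    _ ≤ n * ((n - 1) * (n - a * b)) := mul_le_mul_of_nonneg_right (sub_le_self n hab) hprod
    _ ≤ n * ((n - a) * (n - b)) :=
      mul_le_mul_of_nonneg_left (sub_one_mul_sub_mul_le_sub_mul_sub hn₀ hab') hn₀
    _ = n * (n - a) * (n - b) := (mul_assoc _ _ _).symm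

theorem sub_mul_sub_le_sub_mul_sq (ha : a * b ≤ a) (hb : a * b ≤ b) (hbn : b ≤ n) :
    (n - a) * (n - b) ≤ (n - a * b) ^ 2 := by
  rw [sq]
  exact mul_le_mul (sub_le_sub_left ha n) (sub_le_sub_left hb n) (sub_nonneg.2 hbn)
    (sub_nonneg.2 (hb.trans hbn))

theorem one_sub_mul_one_sub_le_one {x t : R} (hx : x ∈ Icc 0 1) (ht : t ∈ Icc 0 1) :
    (1 - x) * (1 - t) ≤ 1 :=
  mul_le_one₀ (sub_le_self 1 hx.1) (sub_nonneg.2 ht.2) (sub_le_self 1 ht.1)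

end OrderedRing

theorem stmt13_general {K : Type*} [Field K] [LinearOrder K] [IsStrictOrderedRing K]
    {n x t : K} (hn : 1 ≤ n) (hx : x ∈ Icc 0 1) (ht : t ∈ Icc 0 1)
    (hD : n - (1 - x) * (1 - t) ≠ 0) :
    n - 1 ≤ n * (n - 1 + t) * (n - 1 + x) / (n - (1 - x) * (1 - t)) ^ 2 ∧
      n * (n - 1 + t) * (n - 1 + x) / (n - (1 - x) * (1 - t)) ^ 2 ≤ n := by
  obtain ⟨ha₀, ha₁⟩ : 1 - x ∈ Icc 0 1 := Icc.one_sub_mem hx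
  obtain ⟨hb₀, hb₁⟩ : 1 - t ∈ Icc 0 1 := Icc.one_sub_mem ht
  have hD_sq : 0 < (n - (1 - x) * (1 - t)) ^ 2 := by positivity
  have hnum : n * (n - 1 + t) * (n - 1 + x) = n * (n - (1 - x)) * (n - (1 - t)) := by ring
  rw [hnum, le_div_iff₀ hD_sq, div_le_iff₀ hD_sq]
  constructor
  · have hxt : 0 ≤ (1 - (1 - x)) * (1 - (1 - t)) :=
      mul_nonneg (sub_nonneg.2 ha₁) (sub_nonneg.2 hb₁)
    exact sub_one_mul_sub_mul_sq_le hn (mul_nonneg ha₀ hb₀)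
      ((one_sub_mul_one_sub_le_one hx ht).trans hn) hxt
  · rw [mul_assoc]
    exact mul_le_mul_of_nonneg_left
      (sub_mul_sub_le_sub_mul_sq (mul_le_of_le_one_right ha₀ hb₁)
        (mul_le_of_le_one_left hb₀ ha₁) (hb₁.trans hn))
      (zero_le_one.trans hn)

theorem stmt13 (N : ℕ) (hN : 2 ≤ N) (x t : ℝ)
    (hx : x ∈ Set.Icc (0 : ℝ) 1) (ht : t ∈ Set.Icc (0 : ℝ) 1) :
    (N : ℝ) - 1
        ≤ (N : ℝ) * ((N : ℝ) - 1 + t) * ((N : ℝ) - 1 + x)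
            / ((N : ℝ) - (1 - x) * (1 - t)) ^ 2 ∧
    (N : ℝ) * ((N : ℝ) - 1 + t) * ((N : ℝ) - 1 + x)
        / ((N : ℝ) - (1 - x) * (1 - t)) ^ 2 ≤ (N : ℝ) := by
  have hN₁ : (1 : ℝ) < N := Nat.one_lt_cast.2 hN
  exact stmt13_general hN₁.le hx ht
    (sub_pos.2 <| (one_sub_mul_one_sub_le_one hx ht).trans_lt hN₁).ne'
end
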